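/- There are exactly 232 conjugacy classes of finite-index subgroups Γ̄ of PSL(2,ℤ) that have genus zero and satisfy n + 3·e₂(Γ̄) + 2·e₃(Γ̄) = 18, where n is the index of Γ̄. Among these 232 classes: exactly 26 are torsion-free; exactly 143 satisfy e₂(Γ̄) > 0; exactly 32 satisfy e₂(Γ̄) = 0 and e₃(Γ̄) = 1; and exactly 31 satisfy e₂(Γ̄) = 0 and e₃(Γ̄) ≥ 2. -/

import Mathlib

open Matrix

/-- `SL(2,ℤ)`: the group of 2×2 integer matrices of determinant 1. -/
abbrev SL2Z := Matrix.SpecialLinearGroup (Fin 2) ℤ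

instance : Fact (Even (Fintype.card (Fin 2))) := ⟨by simp⟩

/-- The subgroup `{±I}` of `SL(2,ℤ)`. -/
def pmOne : Subgroup SL2Z := Subgroup.zpowers (-1 : SL2Z)

instance : pmOne.Normal := by
  constructor
  intro x hx g
  obtain ⟨n, rfl⟩ := hx
  have h : Commute ((-1 : SL2Z) ^ n) g := (Commute.neg_one_left g).zpow_left n
  refine ⟨n, ?_⟩
  rw [← h.eq, mul_assoc, mul_inv_cancel, mul_one]

/-- `PSL(2,ℤ)`, the modular group, as the quotient of `SL(2,ℤ)` by `{±I}`. -/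
abbrev PSL2Z := SL2Z ⧸ pmOne

/-- The natural projection `ξ : SL(2,ℤ) → PSL(2,ℤ)`. -/
def xi : SL2Z →* PSL2Z := QuotientGroup.mk' pmOne

/-- The element `S` of `PSL(2,ℤ)`, the image of `[[0,-1],[1,0]]`. -/
def Sp : PSL2Z := xi ⟨!![0, -1; 1, 0], by norm_num [Matrix.det_fin_two_of]⟩

/-- The element `T` of `PSL(2,ℤ)`, the image of `[[1,1],[0,1]]`. -/
def Tp : PSL2Z := xi ⟨!![1, 1; 0, 1], by norm_num [Matrix.det_fin_two_of]⟩

/-- The number of left cosets in `PSL(2,ℤ)/Γ` fixed by `g` (for the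
left-multiplication action).  For `g = S` this is `e₂(Γ)`, for `g = S*T` it is `e₃(Γ)`. -/
noncomputable def nFix (g : PSL2Z) (Γ : Subgroup PSL2Z) : ℕ :=
  Nat.card {x : PSL2Z ⧸ Γ // g • x = x}

/-- The number of orbits of the cyclic subgroup generated by `g` on `PSL(2,ℤ)/Γ`.
For `g = S, S*T, T` these are `c₂(Γ), c₃(Γ), h(Γ)` respectively. -/
noncomputable def nOrb (g : PSL2Z) (Γ : Subgroup PSL2Z) : ℕ :=
  Nat.card (MulAction.orbitRel.Quotient (Subgroup.zpowers g) (PSL2Z ⧸ Γ))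

/-- `Γ` has genus zero: `c₂(Γ) + c₃(Γ) + h(Γ) = index(Γ) + 2`. -/
def GenusZero (Γ : Subgroup PSL2Z) : Prop :=
  nOrb Sp Γ + nOrb (Sp * Tp) Γ + nOrb Tp Γ = Γ.index + 2

/-- `Γ` is torsion free: it contains no nontrivial element of finite order. -/
def TorsionFree (Γ : Subgroup PSL2Z) : Prop :=
  ∀ x ∈ Γ, x ≠ 1 → ¬ IsOfFinOrder x

/-- Two subgroups of a group are conjugate. -/
def SubgroupConj {G : Type*} [Group G] (H K : Subgroup G) : Prop :=
  ∃ g : G, Subgroup.map (MulAut.conj g).toMonoidHom H = K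

/-- The number of conjugacy classes of subgroups of `PSL(2,ℤ)` satisfying `P`. -/
noncomputable def countClasses (P : Subgroup PSL2Z → Prop) : ℕ :=
  Nat.card (Quot fun A B : {Γ : Subgroup PSL2Z // P Γ} => SubgroupConj A.1 B.1)

/-- The index of the torsion free subgroup `Γ^tf` associated to `Γ`:
`index(Γ) + 3·e₂(Γ) + 2·e₃(Γ)`. -/
noncomputable def tfIdx (Γ : Subgroup PSL2Z) : ℕ :=
  Γ.index + 3 * nFix Sp Γ + 2 * nFix (Sp * Tp) Γ

/-! Let `U = ST`.  Products of `SU = T` and `SU² = TST` are represented by nonnegative matrices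
other than `±I`, which gives `PSL(2,ℤ) = ⟨S, U | S², U³⟩` and shows that every torsion element is
conjugate to a power of `S` or `U`.  Hence conjugacy classes of subgroups of finite index are
transitive pairs of permutations `s`, `u` with `s² = u³ = 1`, up to renumbering.

A point of such a set has a canonical word, which records the order in which the `u`-cycles are
discovered by following `s`; it determines the stabilizer of the point.  Of its letters, only those
which glue two known points do not contribute to `n + 3e₂ + 2e₃`: all others contribute `3`.  So
`n + 3e₂ + 2e₃ = 18` leaves finitely many words, those with six other letters, and a conjugacy class
is counted at the least of the words of its points. -/

section NormalForm

variable {H K : Type*} [Group H] [Group K] {a b x : H} {l : List H}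

/-- The nonempty words in `a * b` and `a * b ^ 2`.  When `a ^ 2 = b ^ 3 = 1`, these are the
cyclically reduced words in `a` and `b` of length at least two that start with `a`. -/
def positiveWords (a b : H) : Subsemigroup H := Subsemigroup.closure {a * b, a * b ^ 2}

/-- The elements `b ^ i * w * a ^ j`, where `w` is a possibly empty word in `a * b` and
`a * b ^ 2`. -/
def normalForms (a b : H) : Set H :=
  {x | ∃ (i j : ℕ) (l : List H), (∀ y ∈ l, y = a * b ∨ y = a * b ^ 2) ∧
    x = b ^ i * l.prod * a ^ j}

theorem list_prod_mem_positiveWords (hl : ∀ y ∈ l, y = a * b ∨ y = a * b ^ 2) (hne : l ≠ []) :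
    l.prod ∈ positiveWords a b := by
  induction l with
  | nil => exact absurd rfl hne
  | cons y l ih =>
    have hy : y ∈ positiveWords a b := Subsemigroup.subset_closure (hl y List.mem_cons_self)
    rcases eq_or_ne l [] with rfl | hl'
    · simpa only [List.prod_singleton] using hy
    · rw [List.prod_cons]
      exact mul_mem hy (ih (fun z hz => hl z (List.mem_cons_of_mem y hz)) hl')

theorem map_mem_positiveWords (f : H →* K) (hx : x ∈ positiveWords a b) :
    f x ∈ positiveWords (f a) (f b) := by
  induction hx using Subsemigroup.closure_induction with
  | mem y hy =>
    rcases hy with rfl | rfl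
    · exact Subsemigroup.subset_closure (Or.inl (map_mul f a b))
    · exact Subsemigroup.subset_closure (Or.inr (by rw [map_mul, map_pow]; rfl))
  | mul y z _ _ hy hz => exact map_mul f y z ▸ mul_mem hy hz

theorem pow_mem_positiveWords (hx : x ∈ positiveWords a b) {n : ℕ} (hn : n ≠ 0) :
    x ^ n ∈ positiveWords a b := by
  induction n, Nat.one_le_iff_ne_zero.2 hn using Nat.le_induction with
  | base => rwa [pow_one]
  | succ n hn ih => exact pow_succ x n ▸ mul_mem (ih (by lia)) hx

theorem pow_mul_mem_normalForms (k : ℕ) (hx : x ∈ normalForms a b) :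
    b ^ k * x ∈ normalForms a b := by
  obtain ⟨i, j, l, hl, rfl⟩ := hx
  exact ⟨k + i, j, l, hl, by simp only [pow_add, mul_assoc]⟩

theorem mul_mem_normalForms (ha : a ^ 2 = 1) (hb : b ^ 3 = 1) (hx : x ∈ normalForms a b) :
    a * x ∈ normalForms a b := by
  have haa : a * a = 1 := by rw [← pow_two, ha]
  obtain ⟨i, j, l, hl, rfl⟩ := hx
  have hi : b ^ i = b ^ (i % 3) := pow_eq_pow_mod i hb
  have hlt := Nat.mod_lt i three_pos
  interval_cases i % 3
  · match l with
    | [] => exact ⟨0, j + 1, [], by simp, by simp [hi, pow_succ']⟩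
    | y :: l =>
      have hl' := fun z hz => hl z (List.mem_cons_of_mem y hz)
      rcases hl y List.mem_cons_self with rfl | rfl
      · exact ⟨1, j, l, hl', by simp [hi, ← mul_assoc, haa]⟩
      · exact ⟨2, j, l, hl', by simp [hi, ← mul_assoc, haa]⟩
  · exact ⟨0, j, a * b :: l, by simpa using hl, by simp [hi, mul_assoc]⟩
  · exact ⟨0, j, a * b ^ 2 :: l, by simpa using hl, by simp [hi, mul_assoc]⟩

theorem mem_normalForms (ha : a ^ 2 = 1) (hb : b ^ 3 = 1)
    (hgen : Subgroup.closure {a, b} = ⊤) (x : H) : x ∈ normalForms a b := by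
  have ha' : a⁻¹ = a := inv_eq_of_mul_eq_one_right (by rw [← pow_two, ha])
  have hb' : b⁻¹ = b ^ 2 := inv_eq_of_mul_eq_one_right (by rw [← pow_succ', hb])
  have hx : x ∈ Subgroup.closure {a, b} := hgen ▸ Subgroup.mem_top x
  induction hx using Subgroup.closure_induction_left with
  | one => exact ⟨0, 0, [], by simp, by simp⟩
  | mul_left y hy z _ ih =>
    rcases hy with rfl | rfl
    · exact mul_mem_normalForms ha hb ih
    · simpa only [pow_one] using pow_mul_mem_normalForms 1 ih
  | inv_mul_cancel y hy z _ ih =>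
    rcases hy with rfl | rfl
    · exact ha'.symm ▸ mul_mem_normalForms ha hb ih
    · exact hb'.symm ▸ pow_mul_mem_normalForms 2 ih

/-- The elements conjugate to one of the cyclically reduced words `1`, `a`, `b`, `b ^ 2` or to a
word in `a * b` and `a * b ^ 2`. -/
def conjReduced (a b : H) : Set H :=
  {x | ∃ y, IsConj x y ∧ (y = 1 ∨ y = a ∨ y = b ∨ y = b ^ 2 ∨ y ∈ positiveWords a b)}

theorem mem_conjReduced_of_isConj {y : H} (h : IsConj x y) (hy : y ∈ conjReduced a b) :
    x ∈ conjReduced a b :=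
  let ⟨z, hz, hz'⟩ := hy
  ⟨z, h.trans hz, hz'⟩

theorem pow_mem_conjReduced (hb : b ^ 3 = 1) (k : ℕ) : b ^ k ∈ conjReduced a b := by
  refine ⟨b ^ k, IsConj.refl _, ?_⟩
  rw [pow_eq_pow_mod k hb]
  have hlt := Nat.mod_lt k three_pos
  interval_cases k % 3 <;> simp

theorem mul_pow_mem_conjReduced (hb : b ^ 3 = 1) (hl : ∀ y ∈ l, y = a * b ∨ y = a * b ^ 2)
    (h : l.prod * a ∈ conjReduced a b) (k : ℕ) : l.prod * (a * b ^ k) ∈ conjReduced a b := by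
  have append : ∀ y, y = a * b ∨ y = a * b ^ 2 → l.prod * y ∈ conjReduced a b := fun y hy => by
    have hly : ∀ z ∈ l ++ [y], z = a * b ∨ z = a * b ^ 2 := by
      simpa [or_imp, forall_and, hy] using hl
    have hpos := list_prod_mem_positiveWords hly (List.append_ne_nil_of_right_ne_nil l (by simp))
    rw [List.prod_append, List.prod_singleton] at hpos
    exact ⟨_, IsConj.refl _, .inr (.inr (.inr (.inr hpos)))⟩
  rw [pow_eq_pow_mod k hb]
  have hlt := Nat.mod_lt k three_pos
  interval_cases k % 3
  · simpa only [pow_zero, mul_one] using h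
  · exact append _ (.inl (by rw [pow_one]))
  · exact append _ (.inr rfl)

theorem list_prod_mul_mem_conjReduced (ha : a ^ 2 = 1) (hb : b ^ 3 = 1)
    (hl : ∀ y ∈ l, y = a * b ∨ y = a * b ^ 2) :
    l.prod * a ∈ conjReduced a b ∧ ∀ k : ℕ, l.prod * b ^ k ∈ conjReduced a b := by
  have haa : a * a = 1 := by rw [← pow_two, ha]
  induction hn : l.length using Nat.strong_induction_on generalizing l with
  | _ n ih =>
  have shorter : ∀ l' : List H, l'.length < l.length → l' ⊆ l →
      l'.prod * a ∈ conjReduced a b ∧ ∀ k : ℕ, l'.prod * b ^ k ∈ conjReduced a b :=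
    fun l' hlt hsub => ih _ (hn ▸ hlt) (fun y hy => hl y (hsub hy)) rfl
  have letter : ∀ y ∈ l, ∃ e : ℕ, y = a * b ^ e := fun y hy =>
    (hl y hy).elim (fun h => ⟨1, by rw [h, pow_one]⟩) fun h => ⟨2, h⟩
  constructor
  · match l with
    | [] => exact ⟨a, by rw [List.prod_nil, one_mul], .inr (.inl rfl)⟩
    | y :: l =>
      obtain ⟨e, rfl⟩ := letter y List.mem_cons_self
      refine mem_conjReduced_of_isConj (isConj_iff.2 ⟨(a * b ^ e)⁻¹, ?_⟩)
        ((shorter l (Nat.lt_succ_self _) (List.subset_cons_self _ _)).2 e)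
      rw [List.prod_cons, inv_inv, mul_assoc (a * b ^ e), inv_mul_cancel_left, mul_assoc,
        ← mul_assoc a, haa, one_mul]
  · intro k
    rcases List.eq_nil_or_concat' l with rfl | ⟨l', y, rfl⟩
    · simpa only [List.prod_nil, one_mul] using pow_mem_conjReduced hb k
    obtain ⟨e, rfl⟩ := letter y (by simp)
    have hl' : ∀ y ∈ l', y = a * b ∨ y = a * b ^ 2 := fun y hy => hl y (by simp [hy])
    have hprod : (l' ++ [a * b ^ e]).prod * b ^ k = l'.prod * (a * b ^ (e + k)) := by
      simp only [List.prod_append, List.prod_singleton, pow_add, mul_assoc]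
    rw [hprod]
    exact mul_pow_mem_conjReduced hb hl' (shorter l' (by simp) (by simp)).1 _

theorem mem_conjReduced (ha : a ^ 2 = 1) (hb : b ^ 3 = 1)
    (hgen : Subgroup.closure {a, b} = ⊤) (x : H) : x ∈ conjReduced a b := by
  obtain ⟨i, j, l, hl, rfl⟩ := mem_normalForms ha hb hgen x
  refine mem_conjReduced_of_isConj (y := l.prod * (a ^ j * b ^ i))
    (isConj_iff.2 ⟨(b ^ i)⁻¹, by group⟩) ?_
  have hl' := list_prod_mul_mem_conjReduced ha hb hl
  rw [pow_eq_pow_mod j ha]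
  rcases Nat.mod_two_eq_zero_or_one j with h | h <;> rw [h]
  · rw [pow_zero, one_mul]
    exact hl'.2 i
  · rw [pow_one]
    exact mul_pow_mem_conjReduced hb hl hl'.1 i

theorem isConj_of_isOfFinOrder (ha : a ^ 2 = 1) (hb : b ^ 3 = 1)
    (hgen : Subgroup.closure {a, b} = ⊤) (hpos : 1 ∉ positiveWords a b)
    (hx : IsOfFinOrder x) (hx1 : x ≠ 1) : IsConj x a ∨ IsConj x b ∨ IsConj x (b ^ 2) := by
  obtain ⟨y, hxy, rfl | rfl | rfl | rfl | hy⟩ := mem_conjReduced ha hb hgen x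
  · exact absurd (isConj_one_left.1 hxy) hx1
  · exact .inl hxy
  · exact .inr (.inl hxy)
  · exact .inr (.inr hxy)
  · obtain ⟨c, rfl⟩ := isConj_iff.1 hxy
    obtain ⟨n, hn, hxn⟩ := isOfFinOrder_iff_pow_eq_one.1 hx
    have hpow : (c * x * c⁻¹) ^ n = 1 := by rw [conj_pow, hxn, mul_one, mul_inv_cancel]
    exact absurd (hpow ▸ pow_mem_positiveWords hy hn.ne') hpos

/-- The relations `0 ^ 2 = 1 ^ 3 = 1` on two generators numbered `0` and `1`. -/
def modularRels : Set (FreeGroup (Fin 2)) := {.of 0 ^ 2, .of 1 ^ 3}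

theorem exists_presentedGroup_hom (ha : a ^ 2 = 1) (hb : b ^ 3 = 1) :
    ∃ f : PresentedGroup modularRels →* H, f (.of 0) = a ∧ f (.of 1) = b := by
  have hrel : ∀ r ∈ modularRels, FreeGroup.lift ![a, b] r = 1 := by
    rintro _ (rfl | rfl) <;> simp [ha, hb]
  exact ⟨PresentedGroup.toGroup hrel, PresentedGroup.toGroup.of hrel,
    PresentedGroup.toGroup.of hrel⟩

theorem injective_of_one_notMem_positiveWords (ha : a ^ 2 = 1) (hb : b ^ 3 = 1)
    (hgen : Subgroup.closure {a, b} = ⊤) (f : H →* K) (ha1 : f a ≠ 1) (hb1 : f b ≠ 1)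
    (hpos : 1 ∉ positiveWords (f a) (f b)) : Function.Injective f := by
  refine (injective_iff_map_eq_one f).2 fun x hx => ?_
  obtain ⟨y, hxy, hy⟩ := mem_conjReduced ha hb hgen x
  have hfy : f y = 1 := isConj_one_right.1 (hx ▸ f.map_isConj hxy)
  rcases hy with rfl | rfl | rfl | rfl | hy
  · exact isConj_one_left.1 hxy
  · exact absurd hfy ha1
  · exact absurd hfy hb1
  · refine absurd ?_ hb1
    calc f b = f (b ^ 2) * f b := by rw [hfy, one_mul]
      _ = 1 := by rw [← map_mul, ← pow_succ, hb, map_one]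
  · exact absurd (hfy ▸ map_mem_positiveWords f hy) hpos

theorem exists_comp_eq_of_bijective {L : Type*} [Group L] (f : H →* K)
    (hf : Function.Bijective f) (g : H →* L) : ∃ h : K →* L, h.comp f = g := by
  let e := MulEquiv.ofBijective f hf
  exact ⟨g.comp e.symm.toMonoidHom, MonoidHom.ext fun x => congrArg g (e.symm_apply_apply x)⟩

theorem exists_hom_of_one_notMem_positiveWords (ha : a ^ 2 = 1) (hb : b ^ 3 = 1) (ha1 : a ≠ 1)
    (hb1 : b ≠ 1) (hgen : Subgroup.closure {a, b} = ⊤) (hpos : 1 ∉ positiveWords a b)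
    {s u : K} (hs : s ^ 2 = 1) (hu : u ^ 3 = 1) : ∃ f : H →* K, f a = s ∧ f b = u := by
  obtain ⟨φ, rfl, rfl⟩ := exists_presentedGroup_hom ha hb
  obtain ⟨ψ, rfl, rfl⟩ := exists_presentedGroup_hom hs hu
  have hsurj : Function.Surjective φ := by
    rw [← MonoidHom.range_eq_top, ← top_le_iff, ← hgen, Subgroup.closure_le]
    rintro _ (rfl | rfl)
    · exact ⟨.of 0, rfl⟩
    · exact ⟨.of 1, rfl⟩
  have hinj : Function.Injective φ := by
    have h₀ : (PresentedGroup.of (rels := modularRels) 0) ^ 2 = 1 :=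
      PresentedGroup.one_of_mem (by simp [modularRels])
    have h₁ : (PresentedGroup.of (rels := modularRels) 1) ^ 3 = 1 :=
      PresentedGroup.one_of_mem (by simp [modularRels])
    refine injective_of_one_notMem_positiveWords h₀ h₁ ?_ φ ha1 hb1 hpos
    rw [← PresentedGroup.closure_range_of]
    congr 1
    ext y
    simp [Fin.exists_fin_two, eq_comm]
  obtain ⟨χ, hχ⟩ := exists_comp_eq_of_bijective φ ⟨hinj, hsurj⟩ ψ
  exact ⟨χ, by rw [← hχ, MonoidHom.comp_apply], by rw [← hχ, MonoidHom.comp_apply]⟩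

end NormalForm

section ModularGroup

theorem xi_eq_iff (g h : SL2Z) : xi g = xi h ↔ g = h ∨ g = -h := by
  rw [xi, QuotientGroup.mk'_eq_mk']
  constructor
  · rintro ⟨_, ⟨k, rfl⟩, rfl⟩
    rcases Int.even_or_odd k with hk | hk
    · exact .inl (by simp [hk.neg_one_zpow])
    · exact .inr (by simp [hk.neg_one_zpow])
  · rintro (rfl | rfl)
    · exact ⟨1, one_mem _, mul_one g⟩
    · exact ⟨-1, Subgroup.mem_zpowers _, by simp⟩

/-- The element `ST` of order three, which together with `S` generates `PSL(2,ℤ)` freely. -/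
abbrev Up : PSL2Z := Sp * Tp

theorem Sp_eq : Sp = xi ModularGroup.S := rfl

theorem Up_eq : Up = xi (ModularGroup.S * ModularGroup.T) := rfl

theorem Sp_mul_Sp : Sp * Sp = 1 := by
  rw [Sp_eq, ← map_mul, ← map_one xi, xi_eq_iff]
  decide

theorem Sp_sq : Sp ^ 2 = 1 := by rw [pow_two, Sp_mul_Sp]

theorem Up_cube : Up ^ 3 = 1 := by
  rw [Up_eq, ← map_pow, ← map_one xi, xi_eq_iff]
  decide

theorem Sp_ne_one : Sp ≠ 1 := by
  rw [Sp_eq, ← map_one xi, Ne, xi_eq_iff]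
  decide

theorem Up_ne_one : Up ≠ 1 := by
  rw [Up_eq, ← map_one xi, Ne, xi_eq_iff]
  decide

theorem Sp_mul_Up : Sp * Up = Tp := by rw [← mul_assoc, Sp_mul_Sp, one_mul]

theorem closure_Sp_Up : Subgroup.closure {Sp, Up} = ⊤ := by
  have hS : Sp ∈ Subgroup.closure {Sp, Up} := Subgroup.subset_closure (.inl rfl)
  have hU : Up ∈ Subgroup.closure {Sp, Up} := Subgroup.subset_closure (.inr rfl)
  have hmap : (Subgroup.closure {ModularGroup.S, ModularGroup.T}).map xi = ⊤ := by
    rw [SpecialLinearGroup.SL2Z_generators, ← MonoidHom.range_eq_map, MonoidHom.range_eq_top]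
    exact QuotientGroup.mk'_surjective _
  rw [eq_top_iff, ← hmap, MonoidHom.map_closure, Subgroup.closure_le]
  rintro _ ⟨_, rfl | rfl, rfl⟩
  · exact hS
  · exact (Sp_mul_Up ▸ mul_mem hS hU : Tp ∈ _)

theorem exists_nonneg_of_mem_positiveWords {x : PSL2Z} (hx : x ∈ positiveWords Sp Up) :
    ∃ A : SL2Z, xi A = x ∧ 1 ≤ A.1 0 0 ∧ 1 ≤ A.1 1 1 ∧ 0 ≤ A.1 0 1 ∧ 0 ≤ A.1 1 0 ∧
      1 ≤ A.1 0 1 + A.1 1 0 := by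
  induction hx using Subsemigroup.closure_induction with
  | mem y hy =>
    rcases hy with rfl | rfl
    · exact ⟨ModularGroup.T, Sp_mul_Up.symm, by decide⟩
    · refine ⟨ModularGroup.T * ModularGroup.S * ModularGroup.T, ?_, by decide⟩
      rw [Sp_eq, Up_eq, ← map_pow, ← map_mul, xi_eq_iff]
      decide
  | mul y z _ _ hy hz =>
    obtain ⟨A, rfl, _, _, _, _, _⟩ := hy
    obtain ⟨B, rfl, _, _, _, _, _⟩ := hz
    refine ⟨A * B, map_mul xi A B, ?_⟩
    have hmul : (A * B).1 = A.1 * B.1 := rfl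
    simp only [hmul, Matrix.mul_apply, Fin.sum_univ_two]
    refine ⟨?_, ?_, ?_, ?_, ?_⟩ <;> nlinarith

theorem one_notMem_positiveWords : 1 ∉ positiveWords Sp Up := by
  intro h
  obtain ⟨A, hA, h00, -, -, -, hoff⟩ := exists_nonneg_of_mem_positiveWords h
  rw [← map_one xi, xi_eq_iff] at hA
  rcases hA with rfl | rfl
  · simp at hoff
  · simp at h00

theorem exists_modular_hom {K : Type*} [Group K] {s u : K} (hs : s ^ 2 = 1) (hu : u ^ 3 = 1) :
    ∃ f : PSL2Z →* K, f Sp = s ∧ f Up = u :=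
  exists_hom_of_one_notMem_positiveWords Sp_sq Up_cube Sp_ne_one Up_ne_one closure_Sp_Up
    one_notMem_positiveWords hs hu

end ModularGroup

section Torsion

variable {G : Type*} [Group G] {Γ : Subgroup G}

theorem smul_mk_eq_mk_iff {g y : G} : g • (y : G ⧸ Γ) = y ↔ y⁻¹ * g * y ∈ Γ := by
  rw [eq_comm, MulAction.Quotient.smul_mk, QuotientGroup.eq, smul_eq_mul, mul_assoc]

theorem nFix_eq_zero_iff {Γ : Subgroup PSL2Z} (hΓ : Γ.index ≠ 0) {g : PSL2Z} :
    nFix g Γ = 0 ↔ ∀ y : PSL2Z, y⁻¹ * g * y ∉ Γ := by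
  have : Γ.FiniteIndex := ⟨hΓ⟩
  have : Finite (PSL2Z ⧸ Γ) := Subgroup.finite_quotient_of_finiteIndex
  simp only [nFix, Finite.card_eq_zero_iff, isEmpty_subtype, ← smul_mk_eq_mk_iff]
  exact QuotientGroup.mk_surjective.forall

theorem conj_notMem_of_torsionFree {Γ : Subgroup PSL2Z} (hΓ : TorsionFree Γ) {g : PSL2Z}
    (hg : IsOfFinOrder g) (hg1 : g ≠ 1) (y : PSL2Z) : y⁻¹ * g * y ∉ Γ := by
  have hconj : IsConj g (y⁻¹ * g * y) := isConj_iff.2 ⟨y⁻¹, by rw [inv_inv]⟩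
  refine fun hy => hΓ _ hy (fun h => hg1 ?_) (hconj.isOfFinOrder hg)
  exact isConj_one_left.1 (h ▸ hconj)

theorem torsionFree_iff {Γ : Subgroup PSL2Z} (hΓ : Γ.index ≠ 0) :
    TorsionFree Γ ↔ nFix Sp Γ = 0 ∧ nFix Up Γ = 0 := by
  rw [nFix_eq_zero_iff hΓ, nFix_eq_zero_iff hΓ]
  constructor
  · intro h
    have hS : IsOfFinOrder Sp := isOfFinOrder_iff_pow_eq_one.2 ⟨2, two_pos, Sp_sq⟩
    have hU : IsOfFinOrder Up := isOfFinOrder_iff_pow_eq_one.2 ⟨3, three_pos, Up_cube⟩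
    exact ⟨conj_notMem_of_torsionFree h hS Sp_ne_one, conj_notMem_of_torsionFree h hU Up_ne_one⟩
  · rintro ⟨hS, hU⟩ x hx hx1 hfin
    have hback {c g : PSL2Z} (hc : c * x * c⁻¹ = g) : c⁻¹ * g * c ∈ Γ := by
      rwa [← hc, show c⁻¹ * (c * x * c⁻¹) * c = x by group]
    rcases isConj_of_isOfFinOrder Sp_sq Up_cube closure_Sp_Up one_notMem_positiveWords hfin hx1
      with h | h | h <;> obtain ⟨c, hc⟩ := isConj_iff.1 h
    · exact hS c (hback hc)
    · exact hU c (hback hc)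
    · have hU4 : Up ^ 2 * Up ^ 2 = Up := by rw [← pow_add, pow_succ, Up_cube, one_mul]
      have hmem : c⁻¹ * (Up ^ 2 * Up ^ 2) * c ∈ Γ := by
        simpa [mul_assoc] using mul_mem (hback hc) (hback hc)
      exact hU c (hU4 ▸ hmem)

end Torsion

section Exploration

variable {X : Type*} {s u : X → X} {D : Finset X} {l r : List X} {p q : X}

/-- The state of an exploration: the set `D` of discovered points is a union of cycles of `u`, and
the queue `l` consists of the points of `D` at which `s` has not been followed yet. -/
structure Frontier (s u : X → X) (D : Finset X) (l : List X) : Prop where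
  nodup : l.Nodup
  subset : ∀ x ∈ l, x ∈ D
  u_mem : ∀ x ∈ D, u x ∈ D
  s_mem : ∀ x ∈ D, x ∉ l → s x ∈ D
  s_notMem : ∀ x ∈ D, x ∉ l → s x ∉ l

namespace Frontier

theorem empty : Frontier s u ∅ [] := by constructor <;> simp

theorem perm (h : Frontier s u D l) (hlr : l.Perm r) : Frontier s u D r where
  nodup := hlr.nodup h.nodup
  subset x hx := h.subset x (hlr.mem_iff.2 hx)
  u_mem := h.u_mem
  s_mem x hx hxr := h.s_mem x hx (mt hlr.mem_iff.1 hxr)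
  s_notMem x hx hxr hsx := h.s_notMem x hx (mt hlr.mem_iff.1 hxr) (hlr.mem_iff.2 hsx)

theorem fold (h : Frontier s u D (p :: r)) (hp : s p = p) : Frontier s u D r := by
  obtain ⟨h1, h2, h3, h4, h5⟩ := h
  constructor <;> grind

theorem glue (hs : ∀ x, s (s x) = x) (h : Frontier s u D (p :: q :: r)) (hp : s p = q) :
    Frontier s u D r := by
  obtain ⟨h1, h2, h3, h4, h5⟩ := h
  have hq : s q = p := hp ▸ hs p
  constructor <;> grind

theorem apply_notMem (hs : ∀ x, s (s x) = x) (h : Frontier s u D (p :: r)) (hp : s p ≠ p)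
    (hr : s p ∉ r) : s p ∉ D := fun hD =>
  h.s_notMem (s p) hD (by simp [hp, hr]) (by simp [hs])

end Frontier

/-- `Reads s u w l` says that the word `w` describes, letter by letter, an exploration with initial
queue `l`.  Unlike `explore`, it does not require the discovered points to be new or distinct, so
that two explorations with the same word combine into one of pairs of points. -/
inductive Reads (s u : X → X) : List ℕ → List X → Prop
  | nil : Reads s u [] []
  | fold {p w r} (hp : s p = p) (h : Reads s u w r) : Reads s u (0 :: w) (p :: r)
  | leaf {p w r} (hp : u (s p) = s p) (h : Reads s u w r) : Reads s u (1 :: w) (p :: r)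
  | triangle {p w r} (h : Reads s u w (u (s p) :: u (u (s p)) :: r)) : Reads s u (2 :: w) (p :: r)
  | glue {p w r i} (hp : r[i]? = some (s p)) (h : Reads s u w (r.eraseIdx i)) :
    Reads s u ((i + 3) :: w) (p :: r)

theorem Reads.prod {Y : Type*} {s' u' : Y → Y} {w : List ℕ} {l : List (X × Y)}
    (h : Reads s u w (l.map Prod.fst)) (h' : Reads s' u' w (l.map Prod.snd)) :
    Reads (Prod.map s s') (Prod.map u u') w l := by
  induction w generalizing l with
  | nil =>
    cases l with
    | nil => exact .nil
    | cons p r => cases h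
  | cons a w ih =>
    cases l with
    | nil => cases h
    | cons p r =>
      rw [List.map_cons] at h h'
      cases h with
      | fold hp h => cases h' with | fold hp' h' => exact .fold (Prod.ext hp hp') (ih h h')
      | leaf hp h => cases h' with | leaf hp' h' => exact .leaf (Prod.ext hp hp') (ih h h')
      | triangle h => cases h' with | triangle h' => exact .triangle (ih h h')
      | glue hp h =>
        cases h' with
        | glue hp' h' =>
          rw [List.eraseIdx_map] at h h'
          obtain ⟨q, hq, hqp⟩ := Option.map_eq_some_iff.1 (List.getElem?_map.symm.trans hp)
          obtain ⟨_, hq', hqp'⟩ := Option.map_eq_some_iff.1 (List.getElem?_map.symm.trans hp')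
          obtain rfl := Option.some.inj (hq.symm.trans hq')
          exact .glue (hq.trans (congrArg some (Prod.ext hqp hqp'))) (ih h h')

theorem eq_of_notMem_eraseIdx {i : ℕ} (hi : r[i]? = some p) (hq : q ∈ r) (hqi : q ∉ r.eraseIdx i) :
    q = p := by
  obtain ⟨j, hj⟩ := List.mem_iff_getElem?.1 hq
  have hij : j = i := by_contra fun h => hqi (List.mem_eraseIdx_iff_getElem?.2 ⟨j, h, hj⟩)
  exact Option.some.inj (hj.symm.trans (hij ▸ hi))

/-- `ReadsFrom s u w x` says that the word `w` describes an exploration starting with the cell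
of `x`. -/
inductive ReadsFrom (s u : X → X) : List ℕ → X → Prop
  | leaf {w x} (hx : u x = x) (h : Reads s u w [x]) : ReadsFrom s u (1 :: w) x
  | triangle {w x} (h : Reads s u w [x, u x, u (u x)]) : ReadsFrom s u (2 :: w) x

theorem ReadsFrom.prod {Y : Type*} {s' u' : Y → Y} {w : List ℕ} {x : X} {y : Y}
    (h : ReadsFrom s u w x) (h' : ReadsFrom s' u' w y) :
    ReadsFrom (Prod.map s s') (Prod.map u u') w (x, y) := by
  cases h with
  | leaf hx h => cases h' with | leaf hy k => exact .leaf (Prod.ext hx hy) (h.prod k)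
  | triangle h => cases h' with | triangle k => exact .triangle (h.prod k)

/-- The number of points discovered by the letters of a word. -/
def size : List ℕ → ℕ
  | [] => 0
  | 1 :: w => size w + 1
  | 2 :: w => size w + 3
  | _ :: w => size w

theorem Reads.exists_stable (hs : ∀ x, s (s x) = x) (hu : ∀ x, u (u (u x)) = x) {w : List ℕ}
    (h : Reads s u w l) (hl : ∀ x ∈ l, x ∈ D) (hDu : ∀ x ∈ D, u x ∈ D)
    (hDs : ∀ x ∈ D, x ∉ l → s x ∈ D) :
    ∃ E, D ⊆ E ∧ (∀ x ∈ E, s x ∈ E) ∧ (∀ x ∈ E, u x ∈ E) ∧ E.card ≤ D.card + size w := by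
  classical
  induction h generalizing D with
  | nil => exact ⟨D, subset_rfl, fun x hx => hDs x hx List.not_mem_nil, hDu, by simp [size]⟩
  | fold hp _ ih => exact ih (by grind) hDu (by grind)
  | @leaf p w r hp _ ih =>
    obtain ⟨E, hDE, hEs, hEu, hcard⟩ :=
      ih (D := insert (s p) D) (by grind) (by grind) (by grind)
    refine ⟨E, (Finset.subset_insert _ _).trans hDE, hEs, hEu, ?_⟩
    have := Finset.card_insert_le (s p) D
    rw [size]
    lia
  | @triangle p w r _ ih =>
    obtain ⟨E, hDE, hEs, hEu, hcard⟩ :=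
      ih (D := D ∪ {s p, u (s p), u (u (s p))}) (by grind) (by grind) (by grind)
    refine ⟨E, Finset.subset_union_left.trans hDE, hEs, hEu, ?_⟩
    have := Finset.card_union_le D {s p, u (s p), u (u (s p))}
    have := Finset.card_le_three (a := s p) (b := u (s p)) (c := u (u (s p)))
    rw [size]
    lia
  | @glue p w r i hp _ ih =>
    have herase : ∀ x ∈ r, x ∉ r.eraseIdx i → x = s p := fun x => eq_of_notMem_eraseIdx hp
    have hsp : s p ∈ r := List.mem_of_getElem? hp
    have hsub := List.eraseIdx_subset (l := r) (k := i)
    obtain ⟨E, hDE, hEs, hEu, hcard⟩ := ih (by grind) hDu (by grind)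
    exact ⟨E, hDE, hEs, hEu, by simpa [size] using hcard⟩

theorem ReadsFrom.exists_stable (hs : ∀ x, s (s x) = x) (hu : ∀ x, u (u (u x)) = x) {w : List ℕ}
    {x : X} (h : ReadsFrom s u w x) :
    ∃ E : Finset X, x ∈ E ∧ (∀ y ∈ E, s y ∈ E) ∧ (∀ y ∈ E, u y ∈ E) ∧ E.card ≤ size w := by
  classical
  cases h with
  | leaf hx h =>
    obtain ⟨E, hE, hEs, hEu, hcard⟩ :=
      h.exists_stable hs hu (D := {x}) (by grind) (by grind) (by grind)
    exact ⟨E, hE (by simp), hEs, hEu, by rw [size]; simpa [add_comm] using hcard⟩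
  | triangle h =>
    obtain ⟨E, hE, hEs, hEu, hcard⟩ :=
      h.exists_stable hs hu (D := {x, u x, u (u x)}) (by grind) (by grind) (by grind)
    have := Finset.card_le_three (a := x) (b := u x) (c := u (u x))
    exact ⟨E, hE (by simp), hEs, hEu, by rw [size]; lia⟩

variable [DecidableEq X]

/-- The cycle of `q` under a map `u` with `u ^ 3 = 1`, as a list starting at `q`. -/
def cell (u : X → X) (q : X) : List X := if u q = q then [q] else [q, u q, u (u q)]

/-- The letter recording the discovery of the cell of `q`: `1` if `q` is fixed by `u`, and `2` if
its cell has three points. -/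
def cellLetter (u : X → X) (q : X) : ℕ := if u q = q then 1 else 2

/-- The word recording the exploration, by a queue of points whose `s`-image is still to be
visited, of a set with an involution `s` and a map `u` of order three.  The letter of the head
`p` of the queue is `0` if `p` is fixed by `s`, it is `i + 3` if `s p` is the `i`-th of the other
points of the queue, and otherwise it is the letter of the cell of `s p`, which is new.  The
argument before the queue is fuel. -/
def explore (s u : X → X) : ℕ → List X → List ℕ
  | 0, _ => []
  | _ + 1, [] => []
  | f + 1, p :: r =>
    if s p = p then 0 :: explore s u f r
    else if s p ∈ r then (r.idxOf (s p) + 3) :: explore s u f (r.erase (s p))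
    else cellLetter u (s p) :: explore s u f ((cell u (s p)).tail ++ r)

theorem cell_eq_cons (u : X → X) (q : X) : cell u q = q :: (cell u q).tail := by
  unfold cell; split_ifs <;> rfl

theorem u_mem_cell (hu : ∀ x, u (u (u x)) = x) {x : X} (hx : x ∈ cell u q) : u x ∈ cell u q := by
  unfold cell at *
  split_ifs at * with h <;> grind

theorem mem_of_mem_cell (hu : ∀ x, u (u (u x)) = x) {x : X} (hx : x ∈ cell u q)
    (hD : ∀ x ∈ D, u x ∈ D) (hxD : x ∈ D) : q ∈ D := by
  unfold cell at hx
  split_ifs at hx with h <;> grind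

theorem cell_subset {O : Finset X} (hO : ∀ x ∈ O, u x ∈ O) (hq : q ∈ O) :
    (cell u q).toFinset ⊆ O := by
  intro x hx
  rw [List.mem_toFinset] at hx
  unfold cell at hx
  split_ifs at hx <;> grind

theorem nodup_cell (hu : ∀ x, u (u (u x)) = x) (q : X) : (cell u q).Nodup := by
  unfold cell
  split_ifs with h <;> grind

namespace Frontier

theorem glue_erase (hs : ∀ x, s (s x) = x) (h : Frontier s u D (p :: r)) (hp : s p ∈ r) :
    Frontier s u D (r.erase (s p)) :=
  (h.perm ((List.perm_cons_erase hp).cons p)).glue hs rfl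

theorem discover (hu : ∀ x, u (u (u x)) = x) (h : Frontier s u D l) (hq : q ∉ D) :
    Frontier s u (D ∪ (cell u q).toFinset) (cell u q ++ l) where
  nodup := (nodup_cell hu q).append h.nodup fun x hxq hxl =>
    hq (mem_of_mem_cell hu hxq h.u_mem (h.subset x hxl))
  subset x hx := by
    rw [Finset.mem_union, List.mem_toFinset]
    exact (List.mem_append.1 hx).symm.imp_left (h.subset x)
  u_mem x hx := by
    simp only [Finset.mem_union, List.mem_toFinset] at hx ⊢
    exact hx.imp (h.u_mem x) (u_mem_cell hu)
  s_mem x hx hxl := by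
    simp only [Finset.mem_union, List.mem_toFinset, List.mem_append, not_or] at hx hxl ⊢
    exact .inl (h.s_mem x (hx.resolve_right hxl.1) hxl.2)
  s_notMem x hx hxl hsx := by
    simp only [Finset.mem_union, List.mem_toFinset, List.mem_append, not_or] at hx hxl hsx
    have hxD := hx.resolve_right hxl.1
    rcases hsx with hsx | hsx
    · exact hq (mem_of_mem_cell hu hsx h.u_mem (h.s_mem x hxD hxl.2))
    · exact h.s_notMem x hxD hxl.2 hsx

theorem perm_cell_append (u : X → X) (p q : X) (r : List X) :
    (cell u q ++ p :: r).Perm (p :: q :: ((cell u q).tail ++ r)) := by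
  conv_lhs => rw [cell_eq_cons]
  exact List.perm_middle

theorem discover_glue (hs : ∀ x, s (s x) = x) (hu : ∀ x, u (u (u x)) = x)
    (h : Frontier s u D (p :: r)) (hp : s p ≠ p) (hr : s p ∉ r) :
    Frontier s u (D ∪ (cell u (s p)).toFinset) ((cell u (s p)).tail ++ r) :=
  ((h.discover hu (h.apply_notMem hs hp hr)).perm (perm_cell_append u p (s p) r)).glue hs rfl

end Frontier

theorem size_cellLetter_cons (hu : ∀ x, u (u (u x)) = x) (q : X) (w : List ℕ) :
    size (cellLetter u q :: w) = (cell u q).toFinset.card + size w := by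
  rw [List.toFinset_card_of_nodup (nodup_cell hu q)]
  unfold cellLetter cell
  split_ifs <;> simp [size, add_comm]

theorem card_add_size_explore_le (hs : ∀ x, s (s x) = x) (hu : ∀ x, u (u (u x)) = x)
    {O : Finset X} (hOs : ∀ x ∈ O, s x ∈ O) (hOu : ∀ x ∈ O, u x ∈ O) (f : ℕ)
    (h : Frontier s u D l) (hDO : D ⊆ O) : D.card + size (explore s u f l) ≤ O.card := by
  induction f generalizing D l with
  | zero => simpa [explore, size] using Finset.card_le_card hDO
  | succ f ih =>
    match l with
    | [] => simpa [explore, size] using Finset.card_le_card hDO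
    | p :: r =>
      unfold explore
      split_ifs with hp hr
      · exact ih (h.fold hp) hDO
      · exact ih (h.glue_erase hs hr) hDO
      · have hnew := h.apply_notMem hs hp hr
        have hdisj : Disjoint D (cell u (s p)).toFinset := Finset.disjoint_left.2 fun x hxD hx =>
          hnew (mem_of_mem_cell hu (List.mem_toFinset.1 hx) h.u_mem hxD)
        have hsub : D ∪ (cell u (s p)).toFinset ⊆ O :=
          Finset.union_subset hDO (cell_subset hOu (hOs p (hDO (h.subset p List.mem_cons_self))))
        rw [size_cellLetter_cons hu, ← add_assoc, ← Finset.card_union_of_disjoint hdisj]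
        exact ih (h.discover_glue hs hu hp hr) hsub

theorem Reads.cons_cellLetter {w : List ℕ} (h : Reads s u w ((cell u (s p)).tail ++ r)) :
    Reads s u (cellLetter u (s p) :: w) (p :: r) := by
  unfold cellLetter
  unfold cell at h
  split_ifs at h ⊢ with hp
  · exact .leaf hp h
  · exact .triangle h

theorem Reads.cons_idxOf {w : List ℕ} (hp : s p ∈ r) (h : Reads s u w (r.erase (s p))) :
    Reads s u ((r.idxOf (s p) + 3) :: w) (p :: r) :=
  .glue (List.getElem?_idxOf hp) (by rwa [← List.erase_eq_eraseIdx_of_idxOf rfl])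

theorem sum_cell (hu : ∀ x, u (u (u x)) = x) (q : X) :
    ∑ x ∈ (cell u q).toFinset, (if u x = x then 3 else 1) = 3 := by
  rw [List.sum_toFinset _ (nodup_cell hu q)]
  unfold cell
  split_ifs with h
  · simp [h]
  · have h₁ : u (u q) ≠ u q := by grind
    have h₂ : q ≠ u (u q) := by grind
    simp [hu, h, h₁, h₂]

/-- Three times the number of letters other than glueings that remain to be recorded when `D` has
been discovered and `l` is the queue. -/
def defect [Fintype X] (s u : X → X) (D : Finset X) (l : List X) : ℕ :=
  ∑ x ∈ Dᶜ, (if u x = x then 3 else 1) +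
    3 * (Finset.univ.filter fun x => s x = x ∧ (x ∈ l ∨ x ∉ D)).card

section Defect

variable [Fintype X]

theorem defect_perm (hlr : l.Perm r) : defect s u D l = defect s u D r := by
  simp only [defect, hlr.mem_iff]

theorem defect_empty : defect s u ∅ [] =
    Fintype.card X + 3 * (Finset.univ.filter fun x => s x = x).card +
      2 * (Finset.univ.filter fun x => u x = x).card := by
  have hsplit := Finset.card_filter_add_card_filter_not (s := (Finset.univ : Finset X))
    fun x => u x = x
  rw [Finset.card_univ] at hsplit
  simp only [defect, Finset.compl_empty, Finset.sum_ite, Finset.sum_const, smul_eq_mul,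
    Finset.notMem_empty, not_false_eq_true, or_true, and_true]
  lia

theorem defect_fold (h : Frontier s u D (p :: r)) (hp : s p = p) :
    defect s u D (p :: r) = defect s u D r + 3 := by
  have hpr : p ∉ r := (List.nodup_cons.1 h.nodup).1
  have hpD : p ∈ D := h.subset p List.mem_cons_self
  have hinsert : (Finset.univ.filter fun x => s x = x ∧ (x ∈ p :: r ∨ x ∉ D)) =
      insert p (Finset.univ.filter fun x => s x = x ∧ (x ∈ r ∨ x ∉ D)) := by
    ext x
    simp only [Finset.mem_filter_univ, Finset.mem_insert, List.mem_cons]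
    grind
  rw [defect, defect, hinsert, Finset.card_insert_of_notMem (by simp [hpr, hpD]), mul_add_one,
    add_assoc]

theorem defect_glue (hs : ∀ x, s (s x) = x) (hq : q ≠ p) (hp : s p = q) :
    defect s u D (p :: q :: r) = defect s u D r := by
  have hmoved : ∀ x, s x = x → x ≠ p ∧ x ≠ q := by grind
  rw [defect, defect]
  congr 3
  ext x
  simp only [Finset.mem_filter_univ, List.mem_cons]
  grind

theorem defect_discover (hu : ∀ x, u (u (u x)) = x) (h : Frontier s u D l) (hq : q ∉ D) :
    defect s u D l = defect s u (D ∪ (cell u q).toFinset) (cell u q ++ l) + 3 := by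
  have hnew : ∀ x ∈ cell u q, x ∉ D := fun x hx hxD => hq (mem_of_mem_cell hu hx h.u_mem hxD)
  have hcompl : Dᶜ = (D ∪ (cell u q).toFinset)ᶜ ∪ (cell u q).toFinset := by
    ext x
    simp only [Finset.mem_compl, Finset.mem_union, List.mem_toFinset]
    grind
  have hdisj : Disjoint (D ∪ (cell u q).toFinset)ᶜ (cell u q).toFinset :=
    Finset.disjoint_left.2 fun x hx hxq => Finset.mem_compl.1 hx (Finset.mem_union_right _ hxq)
  have hfixed : (Finset.univ.filter fun x => s x = x ∧ (x ∈ l ∨ x ∉ D)) =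
      Finset.univ.filter fun x => s x = x ∧ (x ∈ cell u q ++ l ∨ x ∉ D ∪ (cell u q).toFinset) := by
    ext x
    simp only [Finset.mem_filter_univ, List.mem_append, Finset.mem_union, List.mem_toFinset]
    grind
  rw [defect, defect, hfixed, hcompl, Finset.sum_union hdisj, sum_cell hu, add_right_comm]

end Defect

/-- The words with `b` letters other than glueings that can be read from a queue of `k` points.
The first argument is fuel. -/
def words : ℕ → ℕ → ℕ → List (List ℕ)
  | 0, _, _ => []
  | _ + 1, 0, 0 => [[]]
  | _ + 1, 0, _ + 1 => []
  | f + 1, k + 1, b =>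
    (match b with
      | 0 => []
      | b + 1 => (words f k b).map (0 :: ·) ++ (words f k b).map (1 :: ·) ++
        (words f (k + 2) b).map (2 :: ·)) ++
    (List.range k).flatMap fun i => (words f (k - 1) b).map ((i + 3) :: ·)

theorem nodup_words (f k b : ℕ) : (words f k b).Nodup := by
  induction f generalizing k b with
  | zero => exact List.nodup_nil
  | succ f ih =>
    have hcons : ∀ (a k b : ℕ), ((words f k b).map (a :: ·)).Nodup := fun a k b =>
      (ih k b).map List.cons_injective
    match k, b with
    | 0, 0 => exact List.nodup_singleton _
    | 0, _ + 1 => exact List.nodup_nil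
    | k + 1, b =>
      have hglue : ((List.range k).flatMap fun i =>
          (words f (k - 1) b).map ((i + 3) :: ·)).Nodup := by
        refine List.nodup_flatMap.2 ⟨fun i _ => hcons _ _ _, List.nodup_range.imp fun hij => ?_⟩
        simpa [List.disjoint_left, Function.onFun] using fun _ _ _ _ h => (hij h.symm).elim
      cases b with
      | zero => simpa only [words, List.nil_append] using hglue
      | succ b =>
        simp only [words, List.nodup_append', hcons, hglue, List.disjoint_left, true_and]
        grind

theorem fold_mem_words {f k b : ℕ} {w : List ℕ} (hw : w ∈ words f k b) :
    0 :: w ∈ words (f + 1) (k + 1) (b + 1) := by simp [words, hw]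

theorem cellLetter_mem_words {f k b : ℕ} {w : List ℕ}
    (hw : w ∈ words f ((cell u q).tail.length + k) b) :
    cellLetter u q :: w ∈ words (f + 1) (k + 1) (b + 1) := by
  unfold cell at hw
  unfold cellLetter
  split_ifs at hw ⊢
  · simpa [words] using hw
  · simpa [words, add_comm] using hw

theorem glue_mem_words {f k b i : ℕ} {w : List ℕ} (hi : i < k) (hw : w ∈ words f (k - 1) b) :
    (i + 3) :: w ∈ words (f + 1) (k + 1) b := by
  simp [words, hi, hw]

/-- The maps `s` and `u` generate a transitive action: no nonempty proper subset is stable under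
both. -/
def TransitivePair [Fintype X] (s u : X → X) : Prop :=
  ∀ O : Finset X, O.Nonempty → (∀ x ∈ O, s x ∈ O) → (∀ x ∈ O, u x ∈ O) → O = Finset.univ

theorem explore_spec [Fintype X] (hs : ∀ x, s (s x) = x) (hu : ∀ x, u (u (u x)) = x)
    (hsu : TransitivePair s u) {f b : ℕ} (h : Frontier s u D l) (hD : D.Nonempty)
    (hb : defect s u D l = 3 * b) (hf : 3 * b + l.length < f) :
    explore s u f l ∈ words f l.length b ∧ Reads s u (explore s u f l) l := by
  induction f generalizing D l b with
  | zero => lia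
  | succ f ih =>
    match l with
    | [] =>
      have hDu := hsu D hD (fun x hx => h.s_mem x hx (by simp)) h.u_mem
      have hb0 : b = 0 := by simpa [hDu, defect, eq_comm] using hb
      exact ⟨by simp [hb0, words, explore], .nil⟩
    | p :: r =>
      unfold explore
      rw [List.length_cons] at hf
      split_ifs with hp hr
      · rw [defect_fold h hp] at hb
        obtain ⟨b, rfl⟩ : ∃ b', b = b' + 1 := ⟨b - 1, by lia⟩
        have := ih (h.fold hp) hD (b := b) (by lia) (by lia)
        exact ⟨fold_mem_words this.1, .fold hp this.2⟩
      · have hlen := List.length_erase_of_mem hr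
        rw [defect_perm ((List.perm_cons_erase hr).cons p), defect_glue hs hp rfl] at hb
        have := ih (h.glue_erase hs hr) hD hb (by lia)
        exact ⟨glue_mem_words (List.idxOf_lt_length_of_mem hr) (hlen ▸ this.1),
          .cons_idxOf hr this.2⟩
      · have hnew := h.apply_notMem hs hp hr
        have hlen : (cell u (s p)).tail.length ≤ 2 := by
          unfold cell
          split_ifs <;> simp
        rw [defect_discover hu h hnew, defect_perm (Frontier.perm_cell_append u p (s p) r),
          defect_glue hs hp rfl] at hb
        obtain ⟨b, rfl⟩ : ∃ b', b = b' + 1 := ⟨b - 1, by lia⟩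
        have := ih (h.discover_glue hs hu hp hr) (hD.mono Finset.subset_union_left) (b := b)
          (by lia) (by rw [List.length_append]; lia)
        rw [List.length_append] at this
        exact ⟨cellLetter_mem_words this.1, .cons_cellLetter this.2⟩

/-- The canonical word of the point `x`: the letter of its cell followed by the exploration that
starts there. The fuel is enough for words with `N` letters other than glueings. -/
def word (N : ℕ) (s u : X → X) (x : X) : List ℕ :=
  cellLetter u x :: explore s u (3 * N + 1) (cell u x)

/-- The possible canonical words with `N` letters other than glueings. -/
def allWords (N : ℕ) : List (List ℕ) :=
  (words (3 * N + 1) 1 (N - 1)).map (1 :: ·) ++ (words (3 * N + 1) 3 (N - 1)).map (2 :: ·)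

theorem nodup_allWords (N : ℕ) : (allWords N).Nodup := by
  refine ((nodup_words _ _ _).map List.cons_injective).append
    ((nodup_words _ _ _).map List.cons_injective) ?_
  simp [List.disjoint_left]

theorem frontier_cell (hu : ∀ x, u (u (u x)) = x) (x : X) :
    Frontier s u (cell u x).toFinset (cell u x) := by
  simpa using Frontier.empty.discover hu (Finset.notMem_empty x)

theorem size_word_le_card (hs : ∀ x, s (s x) = x) (hu : ∀ x, u (u (u x)) = x) {O : Finset X}
    (hOs : ∀ x ∈ O, s x ∈ O) (hOu : ∀ x ∈ O, u x ∈ O) {x : X} (hx : x ∈ O) (N : ℕ) :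
    size (word N s u x) ≤ O.card := by
  rw [word, size_cellLetter_cons hu]
  exact card_add_size_explore_le hs hu hOs hOu _ (frontier_cell hu x) (cell_subset hOu hx)

theorem word_spec [Fintype X] {N : ℕ} (hs : ∀ x, s (s x) = x) (hu : ∀ x, u (u (u x)) = x)
    (hsu : TransitivePair s u)
    (hN : Fintype.card X + 3 * (Finset.univ.filter fun x => s x = x).card +
      2 * (Finset.univ.filter fun x => u x = x).card = 3 * N) (x : X) :
    word N s u x ∈ allWords N ∧ ReadsFrom s u (word N s u x) x := by
  have hdefect := defect_discover (s := s) hu Frontier.empty (Finset.notMem_empty x)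
  rw [defect_empty, hN, Finset.empty_union, List.append_nil] at hdefect
  have hne : (cell u x).toFinset.Nonempty := ⟨x, by rw [cell_eq_cons]; simp⟩
  have hlen : (cell u x).length ≤ 3 := by
    unfold cell
    split_ifs <;> simp
  obtain ⟨hmem, hreads⟩ := explore_spec (b := N - 1) (f := 3 * N + 1) hs hu hsu
    (frontier_cell hu x) hne (by lia) (by lia)
  unfold word allWords cellLetter
  unfold cell at hmem hreads ⊢
  split_ifs at hmem hreads ⊢ with hx
  · exact ⟨by simpa using hmem, .leaf hx hreads⟩
  · exact ⟨by simpa using hmem, .triangle hreads⟩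

section Map

variable {Y : Type*} [DecidableEq Y] {s' u' : Y → Y} {φ : X → Y}

theorem idxOf_map_of_injective (hφ : Function.Injective φ) (l : List X) (x : X) :
    (l.map φ).idxOf (φ x) = l.idxOf x := by
  induction l with
  | nil => rfl
  | cons y l ih => simp only [List.map_cons, List.idxOf_cons, beq_eq_decide, hφ.eq_iff, ih]

theorem cell_map (hφ : Function.Injective φ) (hu : ∀ x, φ (u x) = u' (φ x)) (x : X) :
    cell u' (φ x) = (cell u x).map φ := by
  simp only [cell, ← hu, hφ.eq_iff, apply_ite (List.map φ), List.map_cons, List.map_nil]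

theorem cellLetter_map (hφ : Function.Injective φ) (hu : ∀ x, φ (u x) = u' (φ x)) (x : X) :
    cellLetter u' (φ x) = cellLetter u x := by
  simp only [cellLetter, ← hu, hφ.eq_iff]

theorem explore_map (hφ : Function.Injective φ) (hs : ∀ x, φ (s x) = s' (φ x))
    (hu : ∀ x, φ (u x) = u' (φ x)) (f : ℕ) (l : List X) :
    explore s' u' f (l.map φ) = explore s u f l := by
  induction f generalizing l with
  | zero => rfl
  | succ f ih =>
    cases l with
    | nil => rfl
    | cons p r =>
      simp only [List.map_cons, explore, ← hs, hφ.eq_iff, List.mem_map_of_injective hφ,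
        idxOf_map_of_injective hφ, ← List.map_erase hφ, cellLetter_map hφ hu, cell_map hφ hu,
        ← List.map_tail, ← List.map_append, ih]

theorem word_map (hφ : Function.Injective φ) (hs : ∀ x, φ (s x) = s' (φ x))
    (hu : ∀ x, φ (u x) = u' (φ x)) (N : ℕ) (x : X) : word N s' u' (φ x) = word N s u x := by
  rw [word, word, cellLetter_map hφ hu, cell_map hφ hu, explore_map hφ hs hu]

end Map

end Exploration

section Actions

theorem Sp_smul_smul {X : Type*} [MulAction PSL2Z X] (x : X) : Sp • Sp • x = x := by
  rw [smul_smul, Sp_mul_Sp, one_smul]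

theorem Up_smul_smul_smul {X : Type*} [MulAction PSL2Z X] (x : X) : Up • Up • Up • x = x := by
  rw [smul_smul, smul_smul, mul_assoc, ← pow_three, Up_cube, one_smul]

theorem smul_mem_of_stable {X : Type*} [MulAction PSL2Z X] {O : Set X}
    (hS : ∀ x ∈ O, Sp • x ∈ O) (hU : ∀ x ∈ O, Up • x ∈ O) (g : PSL2Z) {x : X} (hx : x ∈ O) :
    g • x ∈ O := by
  have hg : g ∈ Subgroup.closure {Sp, Up} := closure_Sp_Up ▸ Subgroup.mem_top g
  induction hg using Subgroup.closure_induction_left with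
  | one => rwa [one_smul]
  | mul_left y hy z _ ih =>
    rw [mul_smul]
    rcases hy with rfl | rfl
    · exact hS _ ih
    · exact hU _ ih
  | inv_mul_cancel y hy z _ ih =>
    rw [mul_smul]
    rcases hy with rfl | rfl
    · rw [inv_smul_eq_iff.2 (Sp_smul_smul (z • x)).symm]
      exact hS _ ih
    · rw [inv_smul_eq_iff.2 (Up_smul_smul_smul (z • x)).symm]
      exact hU _ (hU _ ih)

variable {X Y : Type*} [MulAction PSL2Z X] {N : ℕ}

theorem transitivePair_smul [Fintype X] [MulAction.IsPretransitive PSL2Z X] :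
    TransitivePair (Sp • · : X → X) (Up • ·) := by
  rintro O ⟨x, hx⟩ hS hU
  refine Finset.eq_univ_iff_forall.2 fun y => ?_
  obtain ⟨g, rfl⟩ := MulAction.exists_smul_eq PSL2Z x y
  exact smul_mem_of_stable (O := (O : Set X)) hS hU g hx

open Classical in
/-- The canonical word of a point of a `PSL(2,ℤ)`-set. -/
noncomputable def actionWord (N : ℕ) (x : X) : List ℕ := word N (Sp • ·) (Up • ·) x

/-- The canonical word of a subgroup, read from its own coset. -/
noncomputable def code (N : ℕ) (Γ : Subgroup PSL2Z) : List ℕ :=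
  actionWord N ((1 : PSL2Z) : PSL2Z ⧸ Γ)

theorem actionWord_eq_word [DecidableEq Y] {s u : Y → Y} {φ : X → Y}
    (hφ : Function.Injective φ) (hS : ∀ x, φ (Sp • x) = s (φ x))
    (hU : ∀ x, φ (Up • x) = u (φ x)) (x : X) : actionWord N x = word N s u (φ x) := by
  classical exact (word_map hφ hS hU N x).symm

theorem code_stabilizer (x : X) : code N (MulAction.stabilizer PSL2Z x) = actionWord N x := by
  classical
  exact actionWord_eq_word (MulAction.injective_ofQuotientStabilizer PSL2Z x)
    (MulAction.ofQuotientStabilizer_smul PSL2Z x Sp)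
    (MulAction.ofQuotientStabilizer_smul PSL2Z x Up) _ |>.trans
    (congrArg (actionWord N) (one_smul PSL2Z x))

variable [MulAction PSL2Z Y]

theorem mem_stabilizer_of_stable {E : Set (X × Y)} (hS : ∀ z ∈ E, Sp • z ∈ E)
    (hU : ∀ z ∈ E, Up • z ∈ E) {x : X} {y : Y} (hxy : (x, y) ∈ E) (hE : Set.InjOn Prod.fst E)
    {g : PSL2Z} (hg : g ∈ MulAction.stabilizer PSL2Z x) : g ∈ MulAction.stabilizer PSL2Z y :=
  congrArg Prod.snd (hE (smul_mem_of_stable hS hU g hxy) hxy hg)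

theorem injOn_of_stable [Fintype X] [MulAction.IsPretransitive PSL2Z X] {Z : Type*} {E : Finset Z}
    {f : Z → X} (hE : E.Nonempty) (hS : ∀ z ∈ E, ∃ z' ∈ E, f z' = Sp • f z)
    (hU : ∀ z ∈ E, ∃ z' ∈ E, f z' = Up • f z) (hcard : E.card ≤ Fintype.card X) :
    Set.InjOn f E := by
  classical
  refine Finset.card_image_iff.1 (le_antisymm Finset.card_image_le ?_)
  rw [transitivePair_smul (E.image f) (hE.image f), Finset.card_univ]
  · exact hcard
  · simpa using hS
  · simpa using hU

theorem stabilizer_le_of_readsFrom [Fintype X] [MulAction.IsPretransitive PSL2Z X] {w : List ℕ}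
    {x : X} {y : Y} (hx : ReadsFrom (Sp • ·) (Up • ·) w x)
    (hy : ReadsFrom (Sp • ·) (Up • ·) w y) (hw : size w ≤ Fintype.card X) :
    MulAction.stabilizer PSL2Z x ≤ MulAction.stabilizer PSL2Z y := by
  classical
  obtain ⟨E, hxy, hS, hU, hcard⟩ := (hx.prod hy).exists_stable
    (fun _ => Prod.ext (Sp_smul_smul _) (Sp_smul_smul _))
    (fun _ => Prod.ext (Up_smul_smul_smul _) (Up_smul_smul_smul _))
  have hinj : Set.InjOn Prod.fst (E : Set (X × Y)) := injOn_of_stable ⟨_, hxy⟩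
    (fun z hz => ⟨_, hS z hz, rfl⟩) (fun z hz => ⟨_, hU z hz, rfl⟩) (hcard.trans hw)
  exact fun g => mem_stabilizer_of_stable hS hU hxy hinj

theorem actionWord_spec [Finite X] [MulAction.IsPretransitive PSL2Z X]
    (hN : Nat.card X + 3 * Nat.card {x : X // Sp • x = x} +
      2 * Nat.card {x : X // Up • x = x} = 3 * N) (x : X) :
    actionWord N x ∈ allWords N ∧ ReadsFrom (Sp • ·) (Up • ·) (actionWord N x) x := by
  classical
  have := Fintype.ofFinite X
  refine word_spec Sp_smul_smul Up_smul_smul_smul transitivePair_smul ?_ x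
  simpa only [Nat.card_eq_fintype_card, Fintype.card_subtype] using hN

theorem size_actionWord_le [Finite X] (N : ℕ) (x : X) :
    size (actionWord N x) ≤ Nat.card (MulAction.orbit PSL2Z x) := by
  classical
  have := Fintype.ofFinite X
  rw [Nat.card_eq_card_toFinset]
  refine size_word_le_card Sp_smul_smul Up_smul_smul_smul (fun y hy => ?_) (fun y hy => ?_) ?_ N
  · exact Set.mem_toFinset.2 (MulAction.mem_orbit_of_mem_orbit _ (Set.mem_toFinset.1 hy))
  · exact Set.mem_toFinset.2 (MulAction.mem_orbit_of_mem_orbit _ (Set.mem_toFinset.1 hy))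
  · exact Set.mem_toFinset.2 (MulAction.mem_orbit_self x)

end Actions

section Invariants

variable {X : Type*} [MulAction PSL2Z X] [MulAction.IsPretransitive PSL2Z X]

/-- The identification of a transitive `PSL(2,ℤ)`-set with the cosets of the stabilizer of `x`. -/
noncomputable def stabilizerEquiv (x : X) : PSL2Z ⧸ MulAction.stabilizer PSL2Z x ≃ X :=
  Equiv.ofBijective (MulAction.ofQuotientStabilizer PSL2Z x)
    ⟨MulAction.injective_ofQuotientStabilizer PSL2Z x, fun y =>
      let ⟨g, hg⟩ := MulAction.exists_smul_eq PSL2Z x y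
      ⟨QuotientGroup.mk g, hg⟩⟩

theorem stabilizerEquiv_smul (x : X) (g : PSL2Z) (q) :
    stabilizerEquiv x (g • q) = g • stabilizerEquiv x q :=
  MulAction.ofQuotientStabilizer_smul _ _ _ _

theorem nFix_stabilizer (g : PSL2Z) (x : X) :
    nFix g (MulAction.stabilizer PSL2Z x) = Nat.card {y : X // g • y = y} :=
  Nat.card_congr ((stabilizerEquiv x).subtypeEquiv fun q => by
    rw [← stabilizerEquiv_smul, (stabilizerEquiv x).apply_eq_iff_eq])

theorem nOrb_stabilizer (g : PSL2Z) (x : X) :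
    nOrb g (MulAction.stabilizer PSL2Z x) =
      Nat.card (MulAction.orbitRel.Quotient (Subgroup.zpowers g) X) := by
  refine Nat.card_congr (Quotient.congr (stabilizerEquiv x) fun a b => exists_congr fun h => ?_)
  change (h : PSL2Z) • b = a ↔ (h : PSL2Z) • stabilizerEquiv x b = stabilizerEquiv x a
  rw [← stabilizerEquiv_smul, (stabilizerEquiv x).apply_eq_iff_eq]

theorem subgroupConj_stabilizer_iff {x : X} {Γ : Subgroup PSL2Z} :
    SubgroupConj (MulAction.stabilizer PSL2Z x) Γ ↔ ∃ y : X, MulAction.stabilizer PSL2Z y = Γ := by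
  constructor
  · rintro ⟨g, rfl⟩
    exact ⟨g • x, MulAction.stabilizer_smul_eq_stabilizer_map_conj g x⟩
  · rintro ⟨y, rfl⟩
    obtain ⟨g, rfl⟩ := MulAction.exists_smul_eq PSL2Z x y
    exact ⟨g, (MulAction.stabilizer_smul_eq_stabilizer_map_conj g x).symm⟩

variable {Γ Γ' : Subgroup PSL2Z}

theorem stabilizer_one_coset (Γ : Subgroup PSL2Z) :
    MulAction.stabilizer PSL2Z ((1 : PSL2Z) : PSL2Z ⧸ Γ) = Γ :=
  MulAction.stabilizer_quotient Γ

theorem SubgroupConj.exists_stabilizer (h : SubgroupConj Γ Γ') :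
    ∃ q : PSL2Z ⧸ Γ, MulAction.stabilizer PSL2Z q = Γ' :=
  subgroupConj_stabilizer_iff.1 ((stabilizer_one_coset Γ).symm ▸ h)

theorem SubgroupConj.index_eq (h : SubgroupConj Γ Γ') : Γ'.index = Γ.index := by
  obtain ⟨q, rfl⟩ := h.exists_stabilizer
  exact MulAction.index_stabilizer_of_transitive PSL2Z q

theorem SubgroupConj.nFix_eq (h : SubgroupConj Γ Γ') (g : PSL2Z) : nFix g Γ' = nFix g Γ := by
  obtain ⟨q, rfl⟩ := h.exists_stabilizer
  exact nFix_stabilizer g q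

theorem SubgroupConj.nOrb_eq (h : SubgroupConj Γ Γ') (g : PSL2Z) : nOrb g Γ' = nOrb g Γ := by
  obtain ⟨q, rfl⟩ := h.exists_stabilizer
  exact nOrb_stabilizer g q

theorem SubgroupConj.tfIdx_eq (h : SubgroupConj Γ Γ') : tfIdx Γ' = tfIdx Γ := by
  rw [tfIdx, tfIdx, h.index_eq, h.nFix_eq, h.nFix_eq]

theorem SubgroupConj.genusZero_iff (h : SubgroupConj Γ Γ') : GenusZero Γ' ↔ GenusZero Γ := by
  rw [GenusZero, GenusZero, h.index_eq, h.nOrb_eq, h.nOrb_eq, h.nOrb_eq]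

theorem equivalence_subgroupConj {G : Type*} [Group G] :
    Equivalence (SubgroupConj (G := G)) where
  refl H := ⟨1, by rw [map_one]; exact Subgroup.map_id H⟩
  symm := by
    rintro H _ ⟨g, rfl⟩
    exact ⟨g⁻¹, by rw [Subgroup.map_map]; convert Subgroup.map_id H; ext x; simp [mul_assoc]⟩
  trans := by
    rintro H _ _ ⟨g, rfl⟩ ⟨k, rfl⟩
    exact ⟨k * g, by rw [Subgroup.map_map, map_mul]; rfl⟩

variable {N : ℕ}

theorem code_spec (hΓ : Γ.index ≠ 0) (hN : tfIdx Γ = 3 * N) : code N Γ ∈ allWords N ∧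
    ReadsFrom (Sp • · : PSL2Z ⧸ Γ → _) (Up • ·) (code N Γ) ((1 : PSL2Z) : PSL2Z ⧸ Γ) := by
  have : Γ.FiniteIndex := ⟨hΓ⟩
  have : Finite (PSL2Z ⧸ Γ) := Subgroup.finite_quotient_of_finiteIndex
  exact actionWord_spec hN _

theorem size_code_le (N : ℕ) (hΓ : Γ.index ≠ 0) : size (code N Γ) ≤ Γ.index := by
  have : Γ.FiniteIndex := ⟨hΓ⟩
  have : Finite (PSL2Z ⧸ Γ) := Subgroup.finite_quotient_of_finiteIndex
  exact (size_actionWord_le N _).trans (Finite.card_subtype_le _)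

theorem le_of_code_eq (hΓ : Γ.index ≠ 0) (hN : tfIdx Γ = 3 * N) (hΓ' : Γ'.index ≠ 0)
    (hN' : tfIdx Γ' = 3 * N) (h : code N Γ = code N Γ') : Γ ≤ Γ' := by
  have : Γ.FiniteIndex := ⟨hΓ⟩
  have := Subgroup.fintypeQuotientOfFiniteIndex (H := Γ)
  have hle := stabilizer_le_of_readsFrom (code_spec hΓ hN).2 (h ▸ (code_spec hΓ' hN').2)
    ((size_code_le N hΓ).trans Nat.card_eq_fintype_card.le)
  rwa [stabilizer_one_coset, stabilizer_one_coset] at hle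

theorem code_injOn (N : ℕ) : Set.InjOn (code N) {Γ | Γ.index ≠ 0 ∧ tfIdx Γ = 3 * N} :=
  fun _ h _ h' e => le_antisymm (le_of_code_eq h.1 h.2 h'.1 h'.2 e)
    (le_of_code_eq h'.1 h'.2 h.1 h.2 e.symm)

end Invariants

section Representatives

theorem card_quot_eq_card_least {α β : Type*} [Finite α] [LinearOrder β] {r : α → α → Prop}
    (hr : Equivalence r) {key : α → β} (hkey : Function.Injective key) :
    Nat.card (Quot r) = Nat.card {a // ∀ b, r a b → key a ≤ key b} := by
  refine (Nat.card_congr (Equiv.ofBijective (fun a => Quot.mk r a.1) ⟨fun a b h => ?_, ?_⟩)).symm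
  · have hab : r a b := hr.quot_mk_eq_iff _ _ |>.1 h
    exact Subtype.ext (hkey (le_antisymm (a.2 b hab) (b.2 a (hr.symm hab))))
  · refine Quot.ind fun a => ?_
    obtain ⟨b, hab, hb⟩ := Set.exists_min_image {b | r a b} key (Set.toFinite _) ⟨a, hr.refl a⟩
    exact ⟨⟨b, fun c hbc => hb c (hr.trans hab hbc)⟩, Quot.sound (hr.symm hab)⟩

theorem minimalPeriod_smul_le_card {G α : Type*} [Group G] [MulAction G α] [Finite α] (g : G)
    (a : α) : Function.minimalPeriod (g • ·) a ≤ Nat.card α := by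
  have := Fintype.ofFinite (MulAction.orbit (Subgroup.zpowers g) a)
  rw [MulAction.minimalPeriod_eq_card, ← Nat.card_eq_fintype_card]
  exact Finite.card_subtype_le _

theorem mem_orbit_zpowers_iff {G α : Type*} [Group G] [MulAction G α] [Finite α] {g : G} {a b : α}
    {k : ℕ} (hk : Function.minimalPeriod (g • ·) a ≤ k) :
    b ∈ MulAction.orbit (Subgroup.zpowers g) a ↔ ∃ i < k, g ^ i • a = b := by
  constructor
  · rintro ⟨⟨_, m, rfl⟩, rfl⟩
    have hpos : 0 < Function.minimalPeriod (g • ·) a :=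
      Function.minimalPeriod_pos_of_mem_periodicPts
        (Function.Injective.mem_periodicPts (MulAction.injective g) a)
    obtain ⟨i, hi⟩ := Int.eq_ofNat_of_zero_le (Int.emod_nonneg m (Int.natCast_ne_zero.2 hpos.ne'))
    have hlt := Int.emod_lt_of_pos m (Int.natCast_pos.2 hpos)
    refine ⟨i, by lia, ?_⟩
    rw [← zpow_natCast, ← hi, MulAction.zpow_smul_mod_minimalPeriod]
    rfl
  · rintro ⟨i, -, rfl⟩
    exact ⟨⟨g ^ i, i, zpow_natCast g i⟩, rfl⟩

end Representatives

section Decoding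

/-- The number whose base `32` digit in position `a` is `b`, all other digits being `0`. -/
def entry (a b : ℕ) : ℕ := b <<< (5 * a)

/-- The base `32` digit of `N` in position `a`.  Maps between small numbers are stored as numbers,
on which the kernel computes natively. -/
def digit (N a : ℕ) : ℕ := N >>> (5 * a) % 32

/-- The involution described by a word, where points are numbered in order of discovery, `m` points
have already been discovered, and the last argument is the queue. -/
def sDigits : List ℕ → ℕ → List ℕ → ℕ
  | 0 :: w, m, p :: r => entry p p + sDigits w m r
  | 1 :: w, m, p :: r => entry p m + entry m p + sDigits w (m + 1) r
  | 2 :: w, m, p :: r => entry p m + entry m p + sDigits w (m + 3) ((m + 1) :: (m + 2) :: r)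
  | (i + 3) :: w, m, p :: r =>
    entry p (r.getD i 0) + entry (r.getD i 0) p + sDigits w m (r.eraseIdx i)
  | _, _, _ => 0

/-- The map of order three described by a word, where points are numbered in order of discovery and
`m` points have already been discovered. -/
def uDigits : List ℕ → ℕ → ℕ
  | [], _ => 0
  | 1 :: w, m => entry m m + uDigits w (m + 1)
  | 2 :: w, m => entry m (m + 1) + entry (m + 1) (m + 2) + entry (m + 2) m + uDigits w (m + 3)
  | _ :: w, m => uDigits w m

/-- The digits of the involution described by a canonical word. -/
def rootedSDigits : List ℕ → ℕ
  | 1 :: w => sDigits w 1 [0]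
  | 2 :: w => sDigits w 3 [0, 1, 2]
  | _ => 0

/-- The involution of `{0, …, size w - 1}` described by the canonical word `w`. -/
def wordS (w : List ℕ) : ℕ → ℕ := digit (rootedSDigits w)

/-- The map of order three of `{0, …, size w - 1}` described by the canonical word `w`. -/
def wordU (w : List ℕ) : ℕ → ℕ := digit (uDigits w 0)

/-- The canonical word of the point `j` of the set described by `w`. -/
def pointWord (N : ℕ) (w : List ℕ) (j : ℕ) : List ℕ := word N (wordS w) (wordU w) j

/-- The number of fixed points of `f` in `{0, …, n - 1}`. -/
def fixedCount (f : ℕ → ℕ) (n : ℕ) : ℕ := (List.range n).countP fun j => Nat.beq (f j) j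

/-- The number of cycles of a permutation `f` of `{0, …, n - 1}` whose cycles have length at most
`k`, each counted at its least element. -/
def cycleCount (k : ℕ) (f : ℕ → ℕ) (n : ℕ) : ℕ :=
  (List.range n).countP fun j => (List.iterate f j k).all (Nat.ble j)

/-- The word `w` describes a transitive action of `PSL(2,ℤ)` with `n + 3 e₂ + 2 e₃ = 3 N`, in which
it is the canonical word of the point `0`. -/
def isValid (N : ℕ) (w : List ℕ) : Bool :=
  let n := size w
  let s := wordS w
  let u := wordU w
  Nat.blt 0 n && pointWord N w 0 == w &&
    Nat.beq (n + 3 * fixedCount s n + 2 * fixedCount u n) (3 * N) &&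
    (List.range n).all fun j => Nat.blt (s j) n && Nat.blt (u j) n && Nat.beq (s (s j)) j &&
      Nat.beq (u (u (u j))) j

/-- The word `w` is the least of the canonical words of the points of the set it describes.  The
points are tried from the last, which tends to reach a smaller word sooner. -/
def isLeast (N : ℕ) (w : List ℕ) : Bool :=
  (List.range (size w)).reverse.all fun j => !(pointWord N w j).lex w

/-- The set described by the word `w` has genus zero. -/
def isGenusZero (w : List ℕ) : Bool :=
  let n := size w
  Nat.beq (cycleCount 2 (wordS w) n + cycleCount 3 (wordU w) n +
    cycleCount n (fun j => wordS w (wordU w j)) n) (n + 2)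

/-- The pairs `(e₂, e₃)` of the conjugacy classes of genus zero with `n + 3 e₂ + 2 e₃ = 3 N`, with
multiplicities. -/
def census (N : ℕ) : List (ℕ × ℕ) :=
  ((allWords N).filter fun w => isLeast N w && isGenusZero w).map fun w =>
    (fixedCount (wordS w) (size w), fixedCount (wordU w) (size w))

theorem card_fin_eq_countP (p : ℕ → Bool) (n : ℕ) :
    Nat.card {j : Fin n // p j} = (List.range n).countP p := by
  rw [Nat.card_eq_fintype_card, Fintype.card_subtype, Finset.card_filter,
    Fin.sum_univ_eq_sum_range (fun j => if p j then 1 else 0) n, ← Finset.card_filter,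
    List.countP_eq_length_filter]
  change (List.filter (fun j => decide (p j = true)) (List.range n)).length = _
  simp only [Bool.decide_eq_true]

section Numbered

variable {n : ℕ} [MulAction PSL2Z (Fin n)] {g : PSL2Z} {f : ℕ → ℕ}

theorem card_fixed_eq_fixedCount (hf : ∀ j : Fin n, (g • j : Fin n).val = f j) :
    Nat.card {j : Fin n // g • j = j} = fixedCount f n := by
  rw [fixedCount, ← card_fin_eq_countP]
  refine Nat.card_congr (Equiv.subtypeEquivRight fun j => ?_)
  rw [Nat.beq_eq, ← hf, Fin.val_inj]

theorem val_pow_smul (hf : ∀ j : Fin n, (g • j : Fin n).val = f j) (i : ℕ) (j : Fin n) :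
    (g ^ i • j : Fin n).val = f^[i] j := by
  induction i with
  | zero => rw [pow_zero, one_smul, Function.iterate_zero_apply]
  | succ i ih => rw [pow_succ', mul_smul, hf, ih, Function.iterate_succ_apply']

theorem card_orbits_eq_cycleCount {k : ℕ} (hf : ∀ j : Fin n, (g • j : Fin n).val = f j)
    (hk : ∀ j : Fin n, Function.minimalPeriod (g • ·) j ≤ k) :
    Nat.card (MulAction.orbitRel.Quotient (Subgroup.zpowers g) (Fin n)) = cycleCount k f n := by
  rw [cycleCount, ← card_fin_eq_countP]
  refine (card_quot_eq_card_least (MulAction.orbitRel _ _).iseqv Function.injective_id).trans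
    (Nat.card_congr (Equiv.subtypeEquivRight fun j => ?_))
  have hmem : ∀ b, (MulAction.orbitRel (Subgroup.zpowers g) (Fin n)) j b ↔ ∃ i < k, g ^ i • j = b :=
    fun b => (Setoid.comm' _).trans (mem_orbit_zpowers_iff (hk j))
  simp only [hmem, forall_exists_index, and_imp, List.all_eq_true, List.mem_iterate, Nat.ble_eq,
    ← val_pow_smul hf]
  constructor
  · rintro h _ i hi rfl
    exact h _ i hi rfl
  · rintro h _ i hi rfl
    exact h _ i hi rfl

end Numbered

theorem exists_mulAction {n : ℕ} {σ υ : ℕ → ℕ} (hσ : ∀ j < n, σ j < n ∧ σ (σ j) = j)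
    (hυ : ∀ j < n, υ j < n ∧ υ (υ (υ j)) = j) :
    ∃ _ : MulAction PSL2Z (Fin n), ∀ j : Fin n,
      (Sp • j : Fin n).val = σ j ∧ (Up • j : Fin n).val = υ j := by
  let s : Equiv.Perm (Fin n) := Function.Involutive.toPerm (fun j => ⟨σ j, (hσ j j.2).1⟩)
    fun j => Fin.ext (hσ j j.2).2
  let u₀ : Fin n → Fin n := fun j => ⟨υ j, (hυ j j.2).1⟩
  have hu₀ : ∀ j, u₀ (u₀ (u₀ j)) = j := fun j => Fin.ext (hυ j j.2).2
  let u : Equiv.Perm (Fin n) := ⟨u₀, u₀ ∘ u₀, hu₀, hu₀⟩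
  obtain ⟨F, hS, hU⟩ := exists_modular_hom (s := s) (u := u)
    (by rw [sq]; exact Equiv.ext fun j => Fin.ext (hσ j j.2).2)
    (by rw [pow_three]; exact Equiv.ext hu₀)
  refine ⟨MulAction.compHom (Fin n) F, fun j => ⟨?_, ?_⟩⟩
  · exact congrArg (fun e : Equiv.Perm (Fin n) => (e j).val) hS
  · exact congrArg (fun e : Equiv.Perm (Fin n) => (e j).val) hU

/-- The word `w` is the canonical word of `Γ`, which satisfies `n + 3 e₂ + 2 e₃ = 3 N`, and the
invariants of `Γ` that are computed from `w` are correct. -/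
structure Describes (N : ℕ) (w : List ℕ) (Γ : Subgroup PSL2Z) : Prop where
  index_ne_zero : Γ.index ≠ 0
  tfIdx_eq : tfIdx Γ = 3 * N
  code_eq : code N Γ = w
  nFix_Sp : nFix Sp Γ = fixedCount (wordS w) (size w)
  nFix_Up : nFix Up Γ = fixedCount (wordU w) (size w)
  genusZero_iff : GenusZero Γ ↔ isGenusZero w
  least_iff : (∀ Γ', SubgroupConj Γ Γ' → code N Γ ≤ code N Γ') ↔ isLeast N w

section Realization

variable {N : ℕ} {w : List ℕ}

theorem isValid_iff : isValid N w ↔ 0 < size w ∧ pointWord N w 0 = w ∧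
    size w + 3 * fixedCount (wordS w) (size w) + 2 * fixedCount (wordU w) (size w) = 3 * N ∧
    ∀ j < size w, (wordS w j < size w ∧ wordS w (wordS w j) = j) ∧
      (wordU w j < size w ∧ wordU w (wordU w (wordU w j)) = j) := by
  simp only [isValid, Bool.and_eq_true, List.all_eq_true, List.mem_range, Nat.blt_eq, Nat.beq_eq,
    beq_iff_eq]
  grind

theorem isLeast_iff : isLeast N w ↔ ∀ j < size w, w ≤ pointWord N w j := by
  simp [isLeast]

theorem isPretransitive_of_le_size {n : ℕ} [MulAction PSL2Z (Fin n)] {j : Fin n}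
    (h : n ≤ size (actionWord N j)) : MulAction.IsPretransitive PSL2Z (Fin n) := by
  refine (MulAction.isPretransitive_iff_orbit_eq_univ j).2 ?_
  refine (Set.eq_univ_iff_ncard _).2 (le_antisymm (Finite.card_subtype_le _) ?_)
  rw [Nat.card_fin]
  exact h.trans (size_actionWord_le N j)

theorem minimalPeriod_Sp_le {X : Type*} [MulAction PSL2Z X] (x : X) :
    Function.minimalPeriod (Sp • · : X → X) x ≤ 2 :=
  Function.IsPeriodicPt.minimalPeriod_le two_pos (Sp_smul_smul x)

theorem minimalPeriod_Up_le {X : Type*} [MulAction PSL2Z X] (x : X) :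
    Function.minimalPeriod (Up • · : X → X) x ≤ 3 :=
  Function.IsPeriodicPt.minimalPeriod_le three_pos (Up_smul_smul_smul x)

theorem describes_stabilizer [MulAction PSL2Z (Fin (size w))]
    [MulAction.IsPretransitive PSL2Z (Fin (size w))]
    (hS : ∀ j : Fin (size w), (Sp • j : Fin (size w)).val = wordS w j)
    (hU : ∀ j : Fin (size w), (Up • j : Fin (size w)).val = wordU w j)
    (hN : size w + 3 * fixedCount (wordS w) (size w) + 2 * fixedCount (wordU w) (size w) = 3 * N)
    {o : Fin (size w)} (ho : pointWord N w o = w) :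
    Describes N w (MulAction.stabilizer PSL2Z o) := by
  have hindex : (MulAction.stabilizer PSL2Z o).index = size w :=
    (MulAction.index_stabilizer_of_transitive PSL2Z o).trans (Nat.card_fin _)
  have hnFixS := (nFix_stabilizer Sp o).trans (card_fixed_eq_fixedCount hS)
  have hnFixU := (nFix_stabilizer Up o).trans (card_fixed_eq_fixedCount hU)
  have hcode : ∀ j : Fin (size w), code N (MulAction.stabilizer PSL2Z j) = pointWord N w j :=
    fun j => (code_stabilizer j).trans (actionWord_eq_word Fin.val_injective hS hU j)
  have hT : ∀ j : Fin (size w), (Tp • j : Fin (size w)).val = wordS w (wordU w j) := fun j => by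
    rw [← Sp_mul_Up, mul_smul, hS, hU]
  have hnOrbS := (nOrb_stabilizer Sp o).trans (card_orbits_eq_cycleCount hS minimalPeriod_Sp_le)
  have hnOrbU := (nOrb_stabilizer Up o).trans (card_orbits_eq_cycleCount hU minimalPeriod_Up_le)
  have hnOrbT := (nOrb_stabilizer Tp o).trans (card_orbits_eq_cycleCount
    (f := fun j => wordS w (wordU w j)) hT fun j =>
      (minimalPeriod_smul_le_card Tp j).trans_eq (Nat.card_fin _))
  refine ⟨hindex.trans_ne o.pos.ne', ?_, (hcode o).trans ho, hnFixS, hnFixU, ?_, ?_⟩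
  · rw [tfIdx, hindex, hnFixS, hnFixU, hN]
  · rw [GenusZero, hnOrbS, hnOrbU, hnOrbT, hindex, isGenusZero, Nat.beq_eq]
  · simp only [isLeast_iff, subgroupConj_stabilizer_iff, hcode o, ho]
    constructor
    · exact fun h j hj => hcode ⟨j, hj⟩ ▸ h _ ⟨⟨j, hj⟩, rfl⟩
    · rintro h _ ⟨j, rfl⟩
      exact hcode j ▸ h j j.2

theorem exists_describes (hw : isValid N w) : ∃ Γ, Describes N w Γ := by
  obtain ⟨hpos, h0, hN, hperm⟩ := isValid_iff.1 hw
  obtain ⟨_, hSU⟩ := exists_mulAction (fun j hj => (hperm j hj).1) fun j hj => (hperm j hj).2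
  have hS := fun j => (hSU j).1
  have hU := fun j => (hSU j).2
  have : MulAction.IsPretransitive PSL2Z (Fin (size w)) := by
    refine isPretransitive_of_le_size (N := N) (j := ⟨0, hpos⟩) ?_
    rw [actionWord_eq_word Fin.val_injective hS hU]
    exact (congrArg size h0).ge
  exact ⟨_, describes_stabilizer hS hU hN (o := ⟨0, hpos⟩) h0⟩

end Realization

section Count

variable {N : ℕ} {Γ : Subgroup PSL2Z}

theorem describes_code (hvalid : ∀ w ∈ allWords N, isValid N w) (hΓ : Γ.index ≠ 0)
    (hN : tfIdx Γ = 3 * N) : Describes N (code N Γ) Γ := by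
  obtain ⟨Γ', h⟩ := exists_describes (hvalid _ (code_spec hΓ hN).1)
  rwa [code_injOn N ⟨h.index_ne_zero, h.tfIdx_eq⟩ ⟨hΓ, hN⟩ h.code_eq] at h

theorem card_eq_countP_of_injective {α β : Type*} {key : α → β} (hkey : Function.Injective key)
    {l : List β} (hl : l.Nodup) {p : β → Bool} (hp : ∀ w, w ∈ Set.range key ↔ w ∈ l ∧ p w) :
    Nat.card α = l.countP p := by
  classical
  have hrange : Set.range key = ((l.filter p).toFinset : Set β) := Set.ext fun w => by simp [hp]
  rw [← Nat.card_range_of_injective hkey, hrange, Nat.card_coe_set_eq, Set.ncard_coe_finset,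
    List.toFinset_card_of_nodup (hl.filter p), List.countP_eq_length_filter]

theorem countClasses_eq_countP {P : Subgroup PSL2Z → Prop} {p : List ℕ → Bool}
    (hvalid : ∀ w ∈ allWords N, isValid N w)
    (hP : ∀ Γ, P Γ → Γ.index ≠ 0 ∧ tfIdx Γ = 3 * N)
    (hconj : ∀ Γ Γ', SubgroupConj Γ Γ' → P Γ → P Γ')
    (hp : ∀ w Γ, Describes N w Γ → (P Γ ↔ p w)) :
    countClasses P = (allWords N).countP fun w => p w && isLeast N w := by
  have hcode : Function.Injective fun Γ : {Γ // P Γ} => code N Γ.1 := fun Γ Γ' h =>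
    Subtype.ext (code_injOn N (hP _ Γ.2) (hP _ Γ'.2) h)
  have hmem : ∀ Γ : {Γ // P Γ}, code N Γ.1 ∈ allWords N := fun Γ =>
    (code_spec (hP _ Γ.2).1 (hP _ Γ.2).2).1
  have : Finite {Γ // P Γ} :=
    .of_injective (fun Γ => (⟨code N Γ.1, hmem Γ⟩ : {w // w ∈ allWords N})) fun Γ Γ' h =>
      hcode (congrArg Subtype.val h)
  have hleast : ∀ Γ : {Γ // P Γ}, (∀ Γ' : {Γ // P Γ}, SubgroupConj Γ.1 Γ'.1 →
      code N Γ.1 ≤ code N Γ'.1) ↔ isLeast N (code N Γ.1) := fun Γ => by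
    rw [← (describes_code hvalid (hP _ Γ.2).1 (hP _ Γ.2).2).least_iff]
    exact ⟨fun h Γ' hΓ' => h ⟨Γ', hconj _ _ hΓ' Γ.2⟩ hΓ', fun h Γ' => h Γ'⟩
  refine (card_quot_eq_card_least (equivalence_subgroupConj.comap Subtype.val) hcode).trans
    (card_eq_countP_of_injective (hcode.comp Subtype.val_injective) (nodup_allWords N) fun w => ?_)
  rw [Bool.and_eq_true]
  constructor
  · rintro ⟨⟨Γ, hΓ⟩, rfl⟩
    exact ⟨hmem Γ, (hp _ _ (describes_code hvalid (hP _ Γ.2).1 (hP _ Γ.2).2)).1 Γ.2,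
      (hleast Γ).1 hΓ⟩
  · rintro ⟨hw, hpw, hlw⟩
    obtain ⟨Γ, h⟩ := exists_describes (hvalid w hw)
    obtain rfl := h.code_eq
    exact ⟨⟨⟨Γ, (hp _ _ h).2 hpw⟩, (hleast ⟨Γ, _⟩).2 hlw⟩, rfl⟩

theorem countClasses_eq_countP_census (hvalid : ∀ w ∈ allWords N, isValid N w)
    (Q : ℕ → ℕ → Prop) [∀ a b, Decidable (Q a b)] :
    countClasses (fun Γ => Γ.index ≠ 0 ∧ GenusZero Γ ∧ tfIdx Γ = 3 * N ∧
      Q (nFix Sp Γ) (nFix Up Γ)) = (census N).countP fun e => Q e.1 e.2 := by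
  rw [census, List.countP_map, List.countP_filter, countClasses_eq_countP
    (p := fun w => decide (Q (fixedCount (wordS w) (size w)) (fixedCount (wordU w) (size w))) &&
      isGenusZero w) hvalid (fun Γ h => ⟨h.1, h.2.2.1⟩)
    (fun Γ Γ' h => by simp only [h.index_eq, h.genusZero_iff, h.tfIdx_eq, h.nFix_eq, imp_self])]
  · congr 1
    ext w
    simp only [Function.comp_apply, Bool.and_assoc, Bool.and_comm (isLeast N w)]
  · intro w Γ h
    simp [h.index_ne_zero, h.genusZero_iff, h.tfIdx_eq, h.nFix_Sp, h.nFix_Up, and_comm]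

end Count

end Decoding

theorem all_isValid_allWords_six : (allWords 6).all (isValid 6) := by
  decide +kernel

theorem census_six_counts :
    (census 6).length = 232 ∧
    (census 6).countP (fun e => e.1 = 0 ∧ e.2 = 0) = 26 ∧
    (census 6).countP (fun e => 0 < e.1) = 143 ∧
    (census 6).countP (fun e => e.1 = 0 ∧ e.2 = 1) = 32 ∧
    (census 6).countP (fun e => e.1 = 0 ∧ 2 ≤ e.2) = 31 := by
  decide +kernel

/-- There are exactly 232 conjugacy classes of genus-zero finite-index subgroups `Γ` of
`PSL(2,ℤ)` with `n + 3e₂ + 2e₃ = 18`; among them exactly 26 are torsion free, 143 have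
`e₂ > 0`, 32 have `e₂ = 0, e₃ = 1`, and 31 have `e₂ = 0, e₃ ≥ 2`. -/
theorem count_K18 :
    countClasses (fun Γ => Γ.index ≠ 0 ∧ GenusZero Γ ∧ tfIdx Γ = 18) = 232 ∧
    countClasses (fun Γ => Γ.index ≠ 0 ∧ GenusZero Γ ∧ tfIdx Γ = 18 ∧ TorsionFree Γ) = 26 ∧
    countClasses (fun Γ => Γ.index ≠ 0 ∧ GenusZero Γ ∧ tfIdx Γ = 18 ∧ 0 < nFix Sp Γ) = 143 ∧
    countClasses (fun Γ => Γ.index ≠ 0 ∧ GenusZero Γ ∧ tfIdx Γ = 18 ∧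
      nFix Sp Γ = 0 ∧ nFix (Sp * Tp) Γ = 1) = 32 ∧
    countClasses (fun Γ => Γ.index ≠ 0 ∧ GenusZero Γ ∧ tfIdx Γ = 18 ∧
      nFix Sp Γ = 0 ∧ 2 ≤ nFix (Sp * Tp) Γ) = 31 := by
  have hcount := countClasses_eq_countP_census (List.all_eq_true.1 all_isValid_allWords_six)
  obtain ⟨hall, htf, hS, hU, hUU⟩ := census_six_counts
  have htorsion : ∀ Γ : Subgroup PSL2Z,
      (Γ.index ≠ 0 ∧ GenusZero Γ ∧ tfIdx Γ = 18 ∧ TorsionFree Γ) ↔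
        Γ.index ≠ 0 ∧ GenusZero Γ ∧ tfIdx Γ = 18 ∧ nFix Sp Γ = 0 ∧ nFix Up Γ = 0 := fun Γ =>
    and_congr_right fun hΓ => by rw [torsionFree_iff hΓ]
  refine ⟨?_, ?_, ?_, ?_, ?_⟩
  · simpa [hall] using hcount fun _ _ => True
  · simp only [htorsion]
    exact (hcount fun a b => a = 0 ∧ b = 0).trans htf
  · exact (hcount fun a _ => 0 < a).trans hS
  · exact (hcount fun a b => a = 0 ∧ b = 1).trans hU
  · exact (hcount fun a b => a = 0 ∧ 2 ≤ b).trans hUU
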